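/- Let w be a weight on ℝⁿ which is positive almost everywhere. Then w ∈ A_p for some p ∈ [1,∞) if and only if w ∈ RH_q for some q ∈ (1,∞]. -/

import Mathlib

/-!
Both implications are instances of one reverse Hölder theorem, `ball_reverse_holder`, for two
measures `ν = f μ` on `ℝⁿ`. Its hypotheses are that `μ` is doubling and that, for all measurable
`E ⊆ B`, `(μ(E) / μ(B)) ^ s ≤ C * ν(E) / ν(B)`; its conclusion is that, for some `ε > 0`,
`∫_B f ^ ε dν ≤ C' * (ν(B) / μ(B)) ^ ε * ν(B)` on every ball.

* If `w ∈ A_p`, Hölder's inequality gives the hypothesis for `μ = dx`, `ν = w dx` with `s = p`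
  (`compare_of_memA`), and the conclusion with `f = w` is `w ∈ RH_{1+ε}`.
* If `w ∈ RH_q`, Hölder's inequality gives the hypothesis with the roles exchanged, `μ = w dx`,
  `ν = dx` and `s = q / (q - 1)` (`compare_of_memRHe`); here `w dx` is doubling because thin annuli have small
  Lebesgue measure (`doubling_of_small`). The conclusion with `f = 1 / w` is `w ∈ A_{1+1/ε}`.

The reverse Hölder theorem is proved by a Calderón–Zygmund stopping argument in the dyadic
subdivision of a cube `Q₀` around `B`. Let `a = ν(Q₀) / μ(Q₀)` and let `E k` be the union of the
subcubes `Q` with `ν(Q) / μ(Q) > (2 * D) ^ k * a`, where `D` is a doubling constant. A maximal such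
`Q` has average at most `D * (2 * D) ^ k * a`, so `E (k + 1)` covers at most half of `Q` in
`μ`-measure, hence at most a fixed fraction `β < 1` in `ν`-measure (`stop_decay`). Thus
`ν(E k) ≤ β ^ k * ν(Q₀)`, while `f ≤ (2 * D) ^ k * a` almost everywhere off `E k`
(`ae_le_of_cells`); summing over `k` bounds `∫ f ^ ε dν` as soon as `(2 * D) ^ ε * β < 1`
(`tree_reverse_holder`, `exists_exponent`).
-/

open MeasureTheory Metric Set ENNReal
open scoped NNReal

noncomputable section

/-- Euclidean space `ℝⁿ`. -/
abbrev En (n : ℕ) := EuclideanSpace ℝ (Fin n)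

/-- The average `⨍_S g dx` of an `ℝ≥0∞`-valued function (Lebesgue measure). -/
def lavg {n : ℕ} (S : Set (En n)) (g : En n → ℝ≥0∞) : ℝ≥0∞ :=
  (∫⁻ y in S, g y) / volume S

/-- The Muckenhoupt class `A_p` for `p = 1` and `1 < p < ∞` (Lebesgue measure). -/
def MemA {n : ℕ} (w : En n → ℝ) (p : ℝ) : Prop :=
  (p = 1 ∧ ∃ C : ℝ≥0, ∀ (x : En n) (r : ℝ), 0 < r →
      ∀ᵐ y ∂volume.restrict (ball x r),
        lavg (ball x r) (fun z => ENNReal.ofReal (w z)) ≤ (C : ℝ≥0∞) * ENNReal.ofReal (w y)) ∨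
  (1 < p ∧ ∃ C : ℝ≥0, ∀ (x : En n) (r : ℝ), 0 < r →
      lavg (ball x r) (fun z => ENNReal.ofReal (w z)) *
        (lavg (ball x r) (fun z => ENNReal.ofReal (w z) ^ (1 - p / (p - 1)))) ^ (p - 1)
        ≤ (C : ℝ≥0∞))

/-- The reverse Hölder class with extended exponent `q ∈ (1,∞]` (Lebesgue measure). -/
def MemRHe {n : ℕ} (w : En n → ℝ) (q : ℝ≥0∞) : Prop :=
  (q = ∞ ∧ ∃ C : ℝ≥0, ∀ (x : En n) (r : ℝ), 0 < r →
      ∀ᵐ y ∂volume.restrict (ball x r),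
        ENNReal.ofReal (w y) ≤ (C : ℝ≥0∞) * lavg (ball x r) (fun z => ENNReal.ofReal (w z))) ∨
  (q ≠ ∞ ∧ ∃ C : ℝ≥0, ∀ (x : En n) (r : ℝ), 0 < r →
      (lavg (ball x r) (fun z => ENNReal.ofReal (w z) ^ q.toReal)) ^ (1 / q.toReal)
        ≤ (C : ℝ≥0∞) * lavg (ball x r) (fun z => ENNReal.ofReal (w z)))

/-! ### Stopping cells in a tree of partitions -/

section Tree

variable {X ι : Type*}

/-- The cell of generation `m` containing `x`, for a sequence of partitions of `X` encoded by
labelling functions `idx m : X → ι`. -/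
def cell (idx : ℕ → X → ι) (m : ℕ) (x : X) : Set X := {y | idx m y = idx m x}

lemma mem_cell_self (idx : ℕ → X → ι) (m : ℕ) (x : X) : x ∈ cell idx m x := rfl

lemma cell_congr {idx : ℕ → X → ι} {m : ℕ} {x y : X} (h : idx m x = idx m y) :
    cell idx m x = cell idx m y := by
  simp [cell, h]

lemma nested_le {idx : ℕ → X → ι}
    (hnest : ∀ m x y, idx (m + 1) x = idx (m + 1) y → idx m x = idx m y)
    {j m : ℕ} (hjm : j ≤ m) {x y : X} (h : idx m x = idx m y) : idx j x = idx j y := by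
  induction hjm with
  | refl => exact h
  | step _ ih => exact ih (hnest _ _ _ h)

variable [MeasurableSpace X] [Countable ι]

lemma measurableSet_stop {idx : ℕ → X → ι} (hmeas : ∀ m x, MeasurableSet (cell idx m x))
    (P : ℕ → X → Prop) (hP : ∀ m x y, idx m x = idx m y → P m x → P m y) :
    MeasurableSet {x | ∃ m, P m x} := by
  have : {x | ∃ m, P m x} =
      ⋃ m, ⋃ i : ι, {x | P m x ∧ idx m x = i} := by
    ext x; simp
  rw [this]
  refine MeasurableSet.iUnion fun m => MeasurableSet.iUnion fun i => ?_
  rcases Set.eq_empty_or_nonempty {x | P m x ∧ idx m x = i} with h | ⟨x, hx, hxi⟩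
  · rw [h]; exact MeasurableSet.empty
  · convert hmeas m x using 1
    ext y
    constructor
    · rintro ⟨_, h⟩; exact h.trans hxi.symm
    · intro h; exact ⟨hP m x y h.symm hx, (show idx m y = idx m x from h).trans hxi⟩

/-- Comparison by stopping times: the set where a cell-wise property `P` ever holds is the disjoint
union of the first cells on which it holds, so it suffices to compare two measures there. -/
lemma measure_stop_le {idx : ℕ → X → ι} (hmeas : ∀ m x, MeasurableSet (cell idx m x))
    (hnest : ∀ m x y, idx (m + 1) x = idx (m + 1) y → idx m x = idx m y)
    (P : ℕ → X → Prop) (hP : ∀ m x y, idx m x = idx m y → P m x → P m y)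
    (ρ₁ ρ₂ : Measure X)
    (h : ∀ m x, P m x → (∀ j < m, ¬ P j x) → ρ₁ (cell idx m x) ≤ ρ₂ (cell idx m x)) :
    ρ₁ {x | ∃ m, P m x} ≤ ρ₂ {x | ∃ m, P m x} := by
  classical
  let V : ℕ × ι → Set X := fun q => {x | P q.1 x ∧ (∀ j < q.1, ¬ P j x) ∧ idx q.1 x = q.2}
  have hU : {x | ∃ m, P m x} = ⋃ q, V q := by
    ext x
    simp only [mem_ofPred_eq, mem_iUnion, V]
    constructor
    · intro hx
      exact ⟨(Nat.find hx, idx (Nat.find hx) x), Nat.find_spec hx,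
        fun j hj => Nat.find_min hx hj, rfl⟩
    · rintro ⟨q, hq, _⟩; exact ⟨_, hq⟩
  have hV : ∀ q, V q = ∅ ∨ ∃ x, P q.1 x ∧ (∀ j < q.1, ¬ P j x) ∧ V q = cell idx q.1 x := by
    intro q
    rcases Set.eq_empty_or_nonempty (V q) with h | ⟨x, hx, hx', hxi⟩
    · exact Or.inl h
    · refine Or.inr ⟨x, hx, hx', ?_⟩
      ext y
      constructor
      · rintro ⟨_, _, h⟩; exact h.trans hxi.symm
      · intro hy
        have hy' : idx q.1 y = idx q.1 x := hy
        exact ⟨hP _ x y hy'.symm hx,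
          fun j hj hPj => hx' j hj (hP j y x (nested_le hnest hj.le hy') hPj), hy'.trans hxi⟩
  have hVm : ∀ q, MeasurableSet (V q) := by
    intro q
    rcases hV q with h | ⟨x, _, _, h⟩ <;> rw [h]
    · exact MeasurableSet.empty
    · exact hmeas _ _
  have hdisj : Pairwise (Function.onFun Disjoint V) := by
    intro q q' hne
    refine Set.disjoint_left.2 ?_
    rintro x ⟨h1, h2, h3⟩ ⟨h1', h2', h3'⟩
    rcases lt_trichotomy q.1 q'.1 with hlt | heq | hlt
    · exact h2' _ hlt h1
    · exact hne (Prod.ext heq (by rw [← h3, ← h3', heq]))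
    · exact h2 _ hlt h1'
  rw [hU, measure_iUnion hdisj hVm, measure_iUnion hdisj hVm]
  refine ENNReal.tsum_le_tsum fun q => ?_
  rcases hV q with hq | ⟨x, h1, h2, hq⟩ <;> rw [hq]
  · simp
  · exact h _ _ h1 h2

/-- Cell-wise differentiation: where all cell averages of `f` are at most `l`, so is `f`. -/
lemma ae_le_of_cells [TopologicalSpace X] {idx : ℕ → X → ι}
    (hmeas : ∀ m x, MeasurableSet (cell idx m x))
    (hnest : ∀ m x y, idx (m + 1) x = idx (m + 1) y → idx m x = idx m y)
    (hsmall : ∀ (U : Set X) x, IsOpen U → x ∈ U → ∃ m, cell idx m x ⊆ U)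
    {μ ν : Measure X} [μ.OuterRegular] [SigmaFinite μ] {f : X → ℝ≥0∞} (hf : Measurable f)
    (hν : ν = μ.withDensity f) {l : ℝ≥0∞} (hl : l ≠ ∞) {F : Set X} (hF : MeasurableSet F)
    (hFl : ∀ x ∈ F, ∀ m, ν (cell idx m x) ≤ l * μ (cell idx m x)) :
    ∀ᵐ x ∂μ, x ∈ F → f x ≤ l := by
  have key : ∀ S, S ⊆ F → ν S ≤ l * μ S := by
    intro S hS
    have hopen : ∀ U, S ⊆ U → IsOpen U → ν S ≤ l * μ U := by
      intro U hSU hU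
      have h1 := measure_stop_le hmeas hnest (fun m x => (cell idx m x ∩ S).Nonempty ∧ cell idx m x ⊆ U)
        (fun m x y hxy h => by rwa [cell_congr hxy] at h) ν (l • μ) (by
          rintro m x ⟨⟨y, hy, hyS⟩, -⟩ -
          have hc : cell idx m x = cell idx m y := cell_congr (Eq.symm hy)
          rw [hc]
          simpa using hFl y (hS hyS) m)
      have h2 : S ⊆ {x | ∃ m, (cell idx m x ∩ S).Nonempty ∧ cell idx m x ⊆ U} := by
        intro x hx
        obtain ⟨m, hm⟩ := hsmall U x hU (hSU hx)
        exact ⟨m, ⟨x, mem_cell_self _ _ _, hx⟩, hm⟩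
      have h3 : {x | ∃ m, (cell idx m x ∩ S).Nonempty ∧ cell idx m x ⊆ U} ⊆ U := by
        rintro x ⟨m, -, hm⟩
        exact hm (mem_cell_self _ _ _)
      calc ν S ≤ _ := measure_mono h2
        _ ≤ _ := h1
        _ ≤ l * μ U := by
          simp only [Measure.smul_apply, smul_eq_mul]
          gcongr
    by_cases htop : l * μ S = ∞
    · rw [htop]; exact le_top
    by_cases hl0 : l = 0
    · have := hopen univ (subset_univ _) isOpen_univ
      simpa [hl0] using this
    refine ENNReal.le_of_forall_pos_le_add fun e he _ => ?_
    have hS' : μ S ≠ ∞ := fun h => htop (by rw [h, ENNReal.mul_top hl0])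
    obtain ⟨U, hSU, hU, hlt⟩ := S.exists_isOpen_lt_add (μ := μ) hS' (ε := e / l)
      (ENNReal.div_pos (by exact_mod_cast he.ne') hl).ne'
    calc ν S ≤ l * μ U := hopen U hSU hU
      _ ≤ l * (μ S + e / l) := by gcongr
      _ = l * μ S + e := by rw [mul_add, ENNReal.mul_div_cancel hl0 hl]
  have h := ae_le_of_forall_setLIntegral_le_of_sigmaFinite (μ := μ.restrict F) (f := f)
    (g := fun _ => l) hf (by
      intro s hs _
      rw [Measure.restrict_restrict hs, lintegral_const, Measure.restrict_apply_univ,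
        ← withDensity_apply _ (hs.inter hF), ← hν]
      exact key _ inter_subset_right)
  exact (ae_restrict_iff' hF).1 h

/-- One step of the Calderón–Zygmund iteration: raising the threshold by the factor `2 * D` shrinks
the stopping set by the factor `β` in `ν`-measure. -/
lemma stop_decay {idx : ℕ → X → ι}
    (hmeas : ∀ m x, MeasurableSet (cell idx m x))
    (hnest : ∀ m x y, idx (m + 1) x = idx (m + 1) y → idx m x = idx m y)
    {μ ν : Measure X} {D β : ℝ≥0∞} (hD1 : 1 ≤ D) (hD : D ≠ ∞)
    (hdbl : ∀ m x, μ (cell idx m x) ≤ D * μ (cell idx (m + 1) x))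
    (hsm : ∀ m x E, MeasurableSet E → E ⊆ cell idx m x → 2 * μ E ≤ μ (cell idx m x) →
      ν E ≤ β * ν (cell idx m x))
    (x₀ : X) {l : ℝ≥0∞} (hl0 : l ≠ 0) (hl : l ≠ ∞)
    (hroot : ν (cell idx 0 x₀) ≤ l * μ (cell idx 0 x₀)) :
    ν {x | ∃ m, x ∈ cell idx 0 x₀ ∧ (2 * D * l) * μ (cell idx m x) < ν (cell idx m x)} ≤
      β * ν {x | ∃ m, x ∈ cell idx 0 x₀ ∧ l * μ (cell idx m x) < ν (cell idx m x)} := by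
  set E' := {x | ∃ m, x ∈ cell idx 0 x₀ ∧ (2 * D * l) * μ (cell idx m x) < ν (cell idx m x)}
    with hE'
  set E := {x | ∃ m, x ∈ cell idx 0 x₀ ∧ l * μ (cell idx m x) < ν (cell idx m x)} with hE
  have hcompat : ∀ t : ℝ≥0∞, ∀ m x y, idx m x = idx m y →
      (x ∈ cell idx 0 x₀ ∧ t * μ (cell idx m x) < ν (cell idx m x)) →
      (y ∈ cell idx 0 x₀ ∧ t * μ (cell idx m y) < ν (cell idx m y)) := by
    intro t m x y hxy h
    rw [cell_congr hxy] at h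
    exact ⟨(nested_le hnest (Nat.zero_le m) hxy).symm.trans h.1, h.2⟩
  have hE'm : MeasurableSet E' := measurableSet_stop hmeas _ (hcompat _)
  have h2D : l ≤ 2 * D * l := by
    calc l = 1 * 1 * l := by simp
      _ ≤ 2 * D * l := by gcongr; norm_num
  have hsub : E' ⊆ E := by
    rintro x ⟨m, hx, hm⟩
    exact ⟨m, hx, lt_of_le_of_lt (by gcongr) hm⟩
  have hstep := measure_stop_le hmeas hnest
    (fun m x => x ∈ cell idx 0 x₀ ∧ l * μ (cell idx m x) < ν (cell idx m x)) (hcompat l)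
    (ν.restrict E') (β • ν) (by
      rintro m x ⟨hx0, hm⟩ hfirst
      rw [Measure.restrict_apply (hmeas _ _), Measure.smul_apply, smul_eq_mul]
      refine hsm m x _ ((hmeas _ _).inter hE'm) inter_subset_left ?_
      -- the root cell does not exceed the threshold, so a stopping cell has a parent
      have hparent : ν (cell idx m x) ≤ l * (D * μ (cell idx m x)) := by
        cases m with
        | zero =>
          rw [cell_congr (show idx 0 x = idx 0 x₀ from hx0)] at hm
          exact absurd hroot (not_le.2 hm)
        | succ m =>
          have h1 := hfirst m (Nat.lt_succ_self m)
          have h2 : ν (cell idx m x) ≤ l * μ (cell idx m x) := by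
            by_contra hcon; exact h1 ⟨hx0, not_le.1 hcon⟩
          calc ν (cell idx (m + 1) x) ≤ ν (cell idx m x) :=
                measure_mono fun y hy => hnest _ _ _ hy
            _ ≤ l * μ (cell idx m x) := h2
            _ ≤ _ := by gcongr; exact hdbl m x
      have hweak := measure_stop_le hmeas hnest
        (fun j y => (m ≤ j ∧ y ∈ cell idx m x) ∧
          (2 * D * l) * μ (cell idx j y) < ν (cell idx j y))
        (by
          rintro j y z hyz ⟨⟨hj, hy⟩, h⟩
          rw [cell_congr hyz] at h
          exact ⟨⟨hj, (nested_le hnest hj hyz).symm.trans hy⟩, h⟩)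
        ((2 * D * l) • μ) (ν.restrict (cell idx m x)) (by
          rintro j y ⟨⟨hj, hy⟩, h⟩ -
          rw [Measure.restrict_apply (hmeas _ _), Measure.smul_apply, smul_eq_mul,
            inter_eq_left.2]
          · exact h.le
          · intro z hz
            exact (nested_le hnest hj hz).trans hy)
      have hset : cell idx m x ∩ E' ⊆ {y | ∃ j, (m ≤ j ∧ y ∈ cell idx m x) ∧
          (2 * D * l) * μ (cell idx j y) < ν (cell idx j y)} := by
        rintro y ⟨hy, j, hy0, hj⟩
        refine ⟨j, ⟨?_, hy⟩, hj⟩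
        by_contra hlt
        have hjm : j < m := not_le.1 hlt
        refine hfirst j hjm ⟨hx0, ?_⟩
        rw [← cell_congr (nested_le hnest hjm.le hy)]
        exact lt_of_le_of_lt (by gcongr) hj
      have hfin : (2 * D * l) * μ (cell idx m x ∩ E') ≤ l * (D * μ (cell idx m x)) := by
        calc (2 * D * l) * μ (cell idx m x ∩ E') ≤ (2 * D * l) * μ _ := by gcongr
          _ ≤ _ := hweak
          _ ≤ ν (cell idx m x) := by
            refine (measure_mono (subset_univ _)).trans ?_
            simp
          _ ≤ _ := hparent
      have hlD0 : l * D ≠ 0 := mul_ne_zero hl0 (by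
        rintro rfl; simp at hD1)
      refine (ENNReal.mul_le_mul_iff_right hlD0 (ENNReal.mul_ne_top hl hD)).1 ?_
      calc l * D * (2 * μ (cell idx m x ∩ E')) = (2 * D * l) * μ (cell idx m x ∩ E') := by ring
        _ ≤ _ := hfin
        _ = _ := by ring)
  have hEE : {x | ∃ m, x ∈ cell idx 0 x₀ ∧ l * μ (cell idx m x) < ν (cell idx m x)} = E := rfl
  rw [hEE, Measure.restrict_apply' hE'm, inter_eq_right.2 hsub] at hstep
  simpa using hstep

/-- The reverse Hölder inequality on the root cell of a tree of partitions. -/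
lemma tree_reverse_holder [TopologicalSpace X] {idx : ℕ → X → ι}
    (hmeas : ∀ m x, MeasurableSet (cell idx m x))
    (hnest : ∀ m x y, idx (m + 1) x = idx (m + 1) y → idx m x = idx m y)
    (hsmall : ∀ (U : Set X) x, IsOpen U → x ∈ U → ∃ m, cell idx m x ⊆ U)
    {μ ν : Measure X} [μ.OuterRegular] [SigmaFinite μ] {f : X → ℝ≥0∞} (hf : Measurable f)
    (hν : ν = μ.withDensity f)
    {D β : ℝ≥0∞} (hD1 : 1 ≤ D) (hD : D ≠ ∞)
    (hdbl : ∀ m x, μ (cell idx m x) ≤ D * μ (cell idx (m + 1) x))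
    (hsm : ∀ m x E, MeasurableSet E → E ⊆ cell idx m x → 2 * μ E ≤ μ (cell idx m x) →
      ν E ≤ β * ν (cell idx m x))
    (x₀ : X) (hμ0 : μ (cell idx 0 x₀) ≠ 0) (hμt : μ (cell idx 0 x₀) ≠ ∞)
    (hν0 : ν (cell idx 0 x₀) ≠ 0) (hνt : ν (cell idx 0 x₀) ≠ ∞) {ε : ℝ} (hε : 0 < ε) :
    ∫⁻ x in cell idx 0 x₀, f x ^ ε ∂ν ≤
      (1 + ∑' k : ℕ, ((2 * D) ^ (k + 1)) ^ ε * β ^ k) *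
        ((ν (cell idx 0 x₀) / μ (cell idx 0 x₀)) ^ ε * ν (cell idx 0 x₀)) := by
  set Q := cell idx 0 x₀ with hQ
  set a := ν Q / μ Q with ha
  have ha0 : a ≠ 0 := (ENNReal.div_pos hν0 hμt).ne'
  have hat : a ≠ ∞ := ENNReal.div_ne_top hνt hμ0
  have haQ : a * μ Q = ν Q := ENNReal.div_mul_cancel hμ0 hμt
  set l : ℕ → ℝ≥0∞ := fun k => (2 * D) ^ k * a with hl
  have h2D1 : 1 ≤ 2 * D := by
    calc (1 : ℝ≥0∞) = 1 * 1 := by simp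
      _ ≤ 2 * D := by gcongr; norm_num
  have h2Dt : 2 * D ≠ ∞ := ENNReal.mul_ne_top (by simp) hD
  have hla : ∀ k, a ≤ l k := fun k => by
    calc a = 1 * a := by simp
      _ ≤ l k := by simp only [hl]; gcongr; exact one_le_pow₀ h2D1
  have hl0 : ∀ k, l k ≠ 0 := fun k => (lt_of_lt_of_le (pos_iff_ne_zero.2 ha0) (hla k)).ne'
  have hlt : ∀ k, l k ≠ ∞ := fun k => ENNReal.mul_ne_top (ENNReal.pow_ne_top h2Dt) hat
  have hls : ∀ k, l (k + 1) = 2 * D * l k := fun k => by simp only [hl]; ring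
  set E : ℕ → Set X := fun k => {x | ∃ m, x ∈ Q ∧ l k * μ (cell idx m x) < ν (cell idx m x)}
    with hE
  have hEm : ∀ k, MeasurableSet (E k) := fun k => by
    refine measurableSet_stop hmeas _ ?_
    intro m x y hxy h
    rw [cell_congr hxy] at h
    exact ⟨(nested_le hnest (Nat.zero_le m) hxy).symm.trans h.1, h.2⟩
  have hdecay : ∀ k, ν (E k) ≤ β ^ k * ν Q := by
    intro k
    induction k with
    | zero =>
      rw [pow_zero, one_mul]
      refine measure_mono ?_
      rintro x ⟨_, hx, _⟩; exact hx
    | succ k ih =>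
      have := stop_decay hmeas hnest hD1 hD hdbl hsm x₀ (hl0 k) (hlt k) (by
        rw [← hQ, ← haQ]; gcongr; exact hla k)
      rw [← hls] at this
      calc ν (E (k + 1)) ≤ β * ν (E k) := this
        _ ≤ β * (β ^ k * ν Q) := by gcongr
        _ = _ := by ring
  have hae : ∀ k, ∀ᵐ x ∂μ, x ∈ Q \ E k → f x ≤ l k := fun k =>
    ae_le_of_cells hmeas hnest hsmall hf hν (hlt k) ((hmeas _ _).diff (hEm k)) (by
      rintro x ⟨hx, hxE⟩ m
      by_contra hcon
      exact hxE ⟨m, hx, not_le.1 hcon⟩)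
  have hac : ν ≪ μ := hν ▸ withDensity_absolutelyContinuous _ _
  have hae' : ∀ᵐ x ∂ν, ∀ k, x ∈ Q \ E k → f x ≤ l k := hac.ae_le (ae_all_iff.2 hae)
  have hbound : ∀ᵐ x ∂(ν.restrict Q), f x ^ ε ≤
      a ^ ε + ∑' k, (E k).indicator (fun _ => l (k + 1) ^ ε) x := by
    rw [ae_restrict_iff' (hmeas _ _)]
    filter_upwards [hae'] with x hx hxQ
    by_cases hall : ∀ k, x ∈ E k
    · have : ∑' k, (E k).indicator (fun _ => l (k + 1) ^ ε) x = ∞ := by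
        refine top_le_iff.1 ?_
        calc (∞ : ℝ≥0∞) = ∑' _ : ℕ, a ^ ε :=
              (ENNReal.tsum_const_eq_top_of_ne_zero (by simp [ha0, hat])).symm
          _ ≤ _ := by
            refine ENNReal.tsum_le_tsum fun k => ?_
            rw [indicator_of_mem (hall k)]
            exact ENNReal.rpow_le_rpow (hla _) hε.le
      rw [this]; simp
    · push Not at hall
      classical
      have hk := Nat.find_spec hall
      have hmin := fun j hj => Nat.find_min hall (m := j) hj
      rcases hj : Nat.find hall with _ | j
      · rw [hj] at hk
        have : f x ≤ a := by simpa [hl] using hx 0 ⟨hxQ, hk⟩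
        exact (ENNReal.rpow_le_rpow this hε.le).trans le_self_add
      · rw [hj] at hk hmin
        have hxj : x ∈ E j := by
          have := hmin j (Nat.lt_succ_self j)
          simpa using this
        calc f x ^ ε ≤ l (j + 1) ^ ε := ENNReal.rpow_le_rpow (hx _ ⟨hxQ, hk⟩) hε.le
          _ = (E j).indicator (fun _ => l (j + 1) ^ ε) x := by rw [indicator_of_mem hxj]
          _ ≤ ∑' k, (E k).indicator (fun _ => l (k + 1) ^ ε) x :=
            ENNReal.le_tsum (f := fun k => (E k).indicator (fun _ => l (k + 1) ^ ε) x) j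
          _ ≤ _ := le_add_self
  calc ∫⁻ x in Q, f x ^ ε ∂ν
      ≤ ∫⁻ x in Q, (a ^ ε + ∑' k, (E k).indicator (fun _ => l (k + 1) ^ ε) x) ∂ν :=
        lintegral_mono_ae hbound
    _ = a ^ ε * ν Q + ∑' k, ∫⁻ x in Q, (E k).indicator (fun _ => l (k + 1) ^ ε) x ∂ν := by
        rw [lintegral_add_left measurable_const, lintegral_tsum
          (fun k => (measurable_const.indicator (hEm k)).aemeasurable)]
        simp
    _ ≤ a ^ ε * ν Q + ∑' k, (((2 * D) ^ (k + 1)) ^ ε * β ^ k) * (a ^ ε * ν Q) := by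
        gcongr with k
        rw [lintegral_indicator_const (hEm k)]
        calc l (k + 1) ^ ε * (ν.restrict Q) (E k)
            ≤ l (k + 1) ^ ε * (β ^ k * ν Q) := by
              gcongr
              exact (Measure.restrict_apply_le _ _).trans (hdecay k)
          _ = _ := by
              simp only [hl]
              rw [ENNReal.mul_rpow_of_nonneg _ _ hε.le]; ring
    _ = _ := by rw [ENNReal.tsum_mul_right]; ring

end Tree

/-- For a fixed base and a ratio `β < 1`, a small power of the base keeps the series summable. -/
lemma exists_exponent {A β : ℝ≥0∞} (hA : A ≠ ∞) (hA1 : 1 ≤ A) (hβ : β < 1) :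
    ∃ ε : ℝ, 0 < ε ∧ (1 + ∑' k : ℕ, (A ^ (k + 1)) ^ ε * β ^ k) ≠ ∞ := by
  lift A to ℝ≥0 using hA
  have hA1' : (1 : ℝ≥0) ≤ A := by exact_mod_cast hA1
  lift β to ℝ≥0 using (ne_top_of_lt hβ)
  have hβ' : β < 1 := by exact_mod_cast hβ
  have hc : Filter.Tendsto (fun e : ℝ => A ^ e * β) (nhds 0) (nhds (A ^ (0:ℝ) * β)) := by
    have : ContinuousAt (fun e : ℝ => A ^ e) 0 :=
      (NNReal.continuousAt_rpow (Or.inl (by positivity))).comp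
        (f := fun e : ℝ => (A, e)) (by fun_prop)
    exact this.mul continuousAt_const
  rw [NNReal.rpow_zero, one_mul] at hc
  have hev := (hc.eventually (gt_mem_nhds hβ')).filter_mono
    (nhdsWithin_le_nhds (s := Ioi (0 : ℝ)))
  obtain ⟨ε, hε, hε0⟩ := (hev.and self_mem_nhdsWithin).exists
  refine ⟨ε, hε0, ?_⟩
  have hε0' : (0 : ℝ) ≤ ε := le_of_lt hε0
  have hterm : ∀ k : ℕ, ((A : ℝ≥0∞) ^ (k + 1)) ^ ε * (β : ℝ≥0∞) ^ k =
      ((A ^ ε * β : ℝ≥0) : ℝ≥0∞) ^ k * ((A ^ ε : ℝ≥0) : ℝ≥0∞) := by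
    intro k
    rw [ENNReal.coe_mul, mul_pow, ENNReal.coe_rpow_of_nonneg _ hε0',
      ← ENNReal.rpow_natCast, ← ENNReal.rpow_mul, mul_comm _ ε, ENNReal.rpow_mul,
      ENNReal.rpow_natCast]
    ring
  simp_rw [hterm]
  rw [ENNReal.tsum_mul_right, ENNReal.tsum_geometric]
  refine ENNReal.add_ne_top.2 ⟨by simp, ENNReal.mul_ne_top ?_ (by simp)⟩
  rw [ENNReal.inv_ne_top]
  have : ((A ^ ε * β : ℝ≥0) : ℝ≥0∞) < 1 := by exact_mod_cast hε
  exact (tsub_pos_of_lt this).ne'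

/-! ### Dyadic grids in Euclidean space -/

section Grid

variable {n : ℕ}

/-- Labels of the half-open dyadic cubes of side `s / 2 ^ m`, in the grid with corner `a`. -/
def gridIdx (a : En n) (s : ℝ) (m : ℕ) (x : En n) : Fin n → ℤ :=
  fun i => ⌊(x i - a i) / s * 2 ^ m⌋

lemma floor_eq_of_two_mul {v v' : ℝ} (h : ⌊v * 2⌋ = ⌊v' * 2⌋) : ⌊v⌋ = ⌊v'⌋ := by
  have key : ∀ v : ℝ, ⌊v⌋ = ⌊v * 2⌋ / 2 := by
    intro v
    rw [Int.floor_eq_iff]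
    have h1 := Int.floor_le (v * 2)
    have h2 := Int.lt_floor_add_one (v * 2)
    set k := ⌊v * 2⌋
    have h3 : 2 * (k / 2) ≤ k := by omega
    have h4 : k + 1 ≤ 2 * (k / 2) + 2 := by omega
    have h3' : (2 : ℝ) * ((k / 2 : ℤ) : ℝ) ≤ k := by exact_mod_cast h3
    have h4' : (k : ℝ) + 1 ≤ 2 * ((k / 2 : ℤ) : ℝ) + 2 := by exact_mod_cast h4
    constructor <;> linarith
  rw [key v, key v', h]

lemma gridIdx_nested (a : En n) (s : ℝ) (m : ℕ) (x y : En n)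
    (h : gridIdx a s (m + 1) x = gridIdx a s (m + 1) y) : gridIdx a s m x = gridIdx a s m y := by
  funext i
  have hi := congrFun h i
  simp only [gridIdx, pow_succ, ← mul_assoc] at hi
  exact floor_eq_of_two_mul hi

lemma measurableSet_gridCell (a : En n) (s : ℝ) (m : ℕ) (x : En n) :
    MeasurableSet (cell (gridIdx a s) m x) := by
  have : Measurable (gridIdx a s m) := by
    refine measurable_pi_iff.2 fun i => ?_
    simp only [gridIdx]
    refine Measurable.floor ?_
    fun_prop
  exact this (measurableSet_singleton (gridIdx a s m x))

lemma dist_lt_of_coord {x y : En n} {b : ℝ} (hb : 0 < b) (h : ∀ i, |x i - y i| ≤ b) :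
    dist x y < (n + 1) * b := by
  rw [EuclideanSpace.dist_eq]
  have hn : (0 : ℝ) ≤ n := Nat.cast_nonneg n
  rw [Real.sqrt_lt' (by positivity)]
  calc ∑ i, dist (x i) (y i) ^ 2 ≤ ∑ _i : Fin n, b ^ 2 := by
        refine Finset.sum_le_sum fun i _ => ?_
        rw [Real.dist_eq]
        gcongr
        exact h i
    _ = n * b ^ 2 := by simp
    _ < _ := by nlinarith [pow_pos hb 2, mul_nonneg hn (pow_pos hb 2).le,
        mul_nonneg (mul_nonneg hn hn) (pow_pos hb 2).le]

lemma coord_of_mem_cell {a : En n} {s : ℝ} (hs : 0 < s) {m : ℕ} {x y : En n}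
    (h : y ∈ cell (gridIdx a s) m x) (i : Fin n) : |y i - x i| ≤ s / 2 ^ m := by
  have hi : ⌊(y i - a i) / s * 2 ^ m⌋ = ⌊(x i - a i) / s * 2 ^ m⌋ := congrFun h i
  have h1 := Int.abs_sub_lt_one_of_floor_eq_floor hi
  have h2 : (y i - a i) / s * 2 ^ m - (x i - a i) / s * 2 ^ m = (y i - x i) / (s / 2 ^ m) := by
    field_simp; ring
  rw [h2, abs_div, abs_of_pos (by positivity : 0 < s / 2 ^ m), div_lt_one (by positivity)] at h1
  exact h1.le

lemma gridCell_small {a : En n} {s : ℝ} (hs : 0 < s) (U : Set (En n)) (x : En n)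
    (hU : IsOpen U) (hx : x ∈ U) : ∃ m, cell (gridIdx a s) m x ⊆ U := by
  obtain ⟨δ, hδ, hball⟩ := Metric.isOpen_iff.1 hU x hx
  obtain ⟨m, hm⟩ := pow_unbounded_of_one_lt ((n + 1) * s / δ) (one_lt_two : (1 : ℝ) < 2)
  refine ⟨m, fun y hy => hball ?_⟩
  have h1 := dist_lt_of_coord (by positivity) (coord_of_mem_cell hs hy)
  refine mem_ball.2 (h1.trans ?_)
  rw [div_lt_iff₀ hδ] at hm
  rw [← mul_div_assoc, div_lt_iff₀ (by positivity)]
  linarith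

/-- A child of the cell contains a ball whose `4 * (n + 1)`-fold dilate contains the cell. -/
lemma gridCell_ball {a : En n} {s : ℝ} (hs : 0 < s) (m : ℕ) (x : En n) :
    ∃ (c : En n) (ρ : ℝ), 0 < ρ ∧ ball c ρ ⊆ cell (gridIdx a s) (m + 1) x ∧
      cell (gridIdx a s) m x ⊆ ball c (4 * (n + 1) * ρ) := by
  set j := gridIdx a s (m + 1) x with hj
  let c : En n := WithLp.toLp 2 (fun i => a i + (j i + 1 / 2) * (s / 2 ^ (m + 1)))
  have hci : ∀ i, c i = a i + (j i + 1 / 2) * (s / 2 ^ (m + 1)) := fun i => rfl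
  have hρ : 0 < s / 2 ^ (m + 1) / 2 := by positivity
  have hsub : ball c (s / 2 ^ (m + 1) / 2) ⊆ cell (gridIdx a s) (m + 1) x := by
    intro y hy
    funext i
    show ⌊(y i - a i) / s * 2 ^ (m + 1)⌋ = j i
    rw [Int.floor_eq_iff]
    have h1 : |y i - c i| < s / 2 ^ (m + 1) / 2 := by
      have := PiLp.norm_apply_le (y - c) i
      rw [← dist_eq_norm] at this
      exact lt_of_le_of_lt (by simpa using this) hy
    rw [hci, abs_lt] at h1
    set σ := s / 2 ^ (m + 1) with hσ
    have h2 : (y i - a i) / s * 2 ^ (m + 1) = (y i - a i) / σ := by rw [hσ]; field_simp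
    have hσ0 : 0 < σ := by positivity
    rw [h2, le_div_iff₀ hσ0, div_lt_iff₀ hσ0]
    constructor <;> nlinarith [h1.1, h1.2]
  refine ⟨c, s / 2 ^ (m + 1) / 2, hρ, hsub, fun y hy => ?_⟩
  have hc : c ∈ cell (gridIdx a s) m x := gridIdx_nested _ _ _ _ _ (hsub (mem_ball_self hρ))
  have hy' : y ∈ cell (gridIdx a s) m c := by
    rwa [cell_congr (show gridIdx a s m c = gridIdx a s m x from hc)]
  have h1 := dist_lt_of_coord (by positivity) (coord_of_mem_cell hs hy')
  refine mem_ball.2 (h1.trans_eq ?_)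
  rw [pow_succ]; field_simp; ring

lemma gridCell_root {x₀ a : En n} {r : ℝ} (hr : 0 < r) (ha : ∀ i, a i = x₀ i - r) :
    ball x₀ r ⊆ cell (gridIdx a (2 * r)) 0 x₀ ∧
      cell (gridIdx a (2 * r)) 0 x₀ ⊆ ball x₀ (4 * (n + 1) * r) := by
  have hn : (0 : ℝ) ≤ n := Nat.cast_nonneg n
  constructor
  · have h0 : ∀ y ∈ ball x₀ r, ∀ i, gridIdx a (2 * r) 0 y i = 0 := by
      intro y hy i
      simp only [gridIdx, pow_zero, mul_one]
      rw [Int.floor_eq_iff]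
      have h1 : |y i - x₀ i| < r := by
        have := PiLp.norm_apply_le (y - x₀) i
        rw [← dist_eq_norm] at this
        exact lt_of_le_of_lt (by simpa using this) hy
      rw [abs_lt] at h1
      rw [ha, le_div_iff₀ (by positivity), div_lt_iff₀ (by positivity)]
      push_cast
      constructor <;> nlinarith [h1.1, h1.2]
    intro y hy
    funext i
    rw [h0 y hy, h0 x₀ (mem_ball_self hr)]
  · intro y hy
    have h1 := dist_lt_of_coord (by positivity) (coord_of_mem_cell (by positivity) hy)
    refine mem_ball.2 (h1.trans_le ?_)
    rw [pow_zero, div_one]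
    nlinarith

/-- The common core of both implications: a quantitative `A_∞` comparison of `μ` and `ν` on balls
and doubling of `μ` give a reverse Hölder inequality for `f = dν/dμ` with respect to `μ`
(note that `f ^ ε ν = f ^ (1 + ε) μ`). -/
theorem ball_reverse_holder {μ ν : Measure (En n)} [IsLocallyFiniteMeasure μ]
    [IsLocallyFiniteMeasure ν] {f : En n → ℝ≥0∞}
    (hf : Measurable f) (hν : ν = μ.withDensity f)
    (hμ0 : ∀ x r, 0 < r → μ (ball x r) ≠ 0) (hν0 : ∀ x r, 0 < r → ν (ball x r) ≠ 0)
    {D : ℝ≥0∞} (hD : D ≠ ∞)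
    (hdbl : ∀ x r, 0 < r → μ (ball x (4 * (n + 1) * r)) ≤ D * μ (ball x r))
    {p : ℝ} (hp : 0 < p) {C : ℝ≥0∞} (hC : C ≠ ∞)
    (H : ∀ x r, 0 < r → ∀ E ⊆ ball x r, MeasurableSet E →
      μ E ^ p * ν (ball x r) ≤ C * ν E * μ (ball x r) ^ p) :
    ∃ ε : ℝ, 0 < ε ∧ ∃ C' : ℝ≥0∞, C' ≠ ∞ ∧ ∀ x r, 0 < r →
      ∫⁻ y in ball x r, f y ^ ε ∂ν ≤
        C' * ((ν (ball x r) / μ (ball x r)) ^ ε * ν (ball x r)) := by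
  have hμt : ∀ x r, μ (ball x r) ≠ ∞ := fun x r => measure_ball_lt_top.ne
  have hνt : ∀ x r, ν (ball x r) ≠ ∞ := fun x r => measure_ball_lt_top.ne
  have hn : (0 : ℝ) ≤ n := Nat.cast_nonneg n
  have hD1 : 1 ≤ D := by
    have h1 := hdbl 0 1 one_pos
    have h2 : μ (ball (0 : En n) 1) ≤ μ (ball 0 (4 * (n + 1) * 1)) :=
      measure_mono (ball_subset_ball (by nlinarith))
    have h3 : 1 * μ (ball (0 : En n) 1) ≤ D * μ (ball 0 1) := by
      rw [one_mul]; exact h2.trans h1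
    exact (ENNReal.mul_le_mul_iff_left (hμ0 0 1 one_pos) (hμt 0 1)).1 h3
  -- substantial subsets of a ball carry a fixed proportion of its `ν`-mass
  have hsub : ∀ (T : ℝ≥0∞) x r, 0 < r → ∀ E ⊆ ball x r, MeasurableSet E →
      μ (ball x r) ≤ T * μ E → ν (ball x r) ≤ C * T ^ p * ν E := by
    intro T x r hr E hE hEm hT
    have hE0 : μ E ≠ 0 := by
      intro h; rw [h, mul_zero] at hT
      exact hμ0 x r hr (le_antisymm hT bot_le)
    have hEt : μ E ≠ ∞ := ((measure_mono hE).trans_lt measure_ball_lt_top).ne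
    have hEp0 : μ E ^ p ≠ 0 := by simp [ENNReal.rpow_eq_zero_iff, hE0, hEt]
    have hEpt : μ E ^ p ≠ ∞ := ENNReal.rpow_ne_top_of_nonneg hp.le hEt
    refine (ENNReal.mul_le_mul_iff_right hEp0 hEpt).1 ?_
    calc μ E ^ p * ν (ball x r) ≤ C * ν E * μ (ball x r) ^ p := H x r hr E hE hEm
      _ ≤ C * ν E * (T * μ E) ^ p := by gcongr
      _ = _ := by rw [ENNReal.mul_rpow_of_nonneg _ _ hp.le]; ring
  set M := C * (2 * D) ^ p with hM
  have hMt : M ≠ ∞ := ENNReal.mul_ne_top hC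
    (ENNReal.rpow_ne_top_of_nonneg hp.le (ENNReal.mul_ne_top (by simp) hD))
  set β := 1 - M⁻¹ with hβdef
  have hβ : β < 1 := ENNReal.sub_lt_self (by simp) (by simp) (by simpa using hMt)
  have h2D1 : 1 ≤ 2 * D := by
    calc (1 : ℝ≥0∞) = 1 * 1 := by simp
      _ ≤ 2 * D := by gcongr; norm_num
  obtain ⟨ε, hε, hS⟩ := exists_exponent (ENNReal.mul_ne_top (by simp) hD) h2D1 hβ
  set S := (1 + ∑' k : ℕ, ((2 * D) ^ (k + 1)) ^ ε * β ^ k) with hSdef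
  set N := C * D ^ p with hN
  have hNt : N ≠ ∞ := ENNReal.mul_ne_top hC (ENNReal.rpow_ne_top_of_nonneg hp.le hD)
  refine ⟨ε, hε, S * (N ^ ε * N), ENNReal.mul_ne_top hS (ENNReal.mul_ne_top
    (ENNReal.rpow_ne_top_of_nonneg hε.le hNt) hNt), fun x₀ r hr => ?_⟩
  let a : En n := WithLp.toLp 2 (fun i => x₀ i - r)
  obtain ⟨hin, hout⟩ := gridCell_root (x₀ := x₀) (a := a) hr (fun i => rfl)
  have hs : 0 < 2 * r := by positivity
  set idx := gridIdx a (2 * r) with hidx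
  have hcell_t : ∀ (ρ : Measure (En n)) [IsLocallyFiniteMeasure ρ], ∀ m x, ρ (cell idx m x) ≠ ∞ := by
    intro ρ _ m x
    obtain ⟨c, t, _, _, h2⟩ := gridCell_ball (a := a) hs m x
    exact ((measure_mono h2).trans_lt measure_ball_lt_top).ne
  have hmain := tree_reverse_holder (idx := idx) (measurableSet_gridCell a _) (gridIdx_nested a _)
    (gridCell_small hs) hf hν hD1 hD (β := β)
    (by
      intro m x
      obtain ⟨c, t, ht, h1, h2⟩ := gridCell_ball (a := a) hs m x
      calc μ (cell idx m x) ≤ μ (ball c (4 * (n + 1) * t)) := measure_mono h2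
        _ ≤ D * μ (ball c t) := hdbl c t ht
        _ ≤ _ := by gcongr)
    (by
      intro m x E hEm hE hsmall
      obtain ⟨c, t, ht, h1, h2⟩ := gridCell_ball (a := a) hs m x
      set Q := cell idx m x with hQ
      have hQm : MeasurableSet Q := measurableSet_gridCell a _ m x
      have hcQ : ball c t ⊆ Q := h1.trans fun y hy => gridIdx_nested _ _ _ _ _ hy
      have hadd : μ E + μ (Q \ E) = μ Q := by
        rw [← measure_inter_add_sdiff Q hEm, inter_eq_right.2 hE]
      have hF : μ Q ≤ 2 * μ (Q \ E) := by
        have : μ Q + 2 * μ E ≤ 2 * μ (Q \ E) + 2 * μ E := by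
          calc μ Q + 2 * μ E ≤ μ Q + μ Q := by gcongr
            _ = 2 * μ (Q \ E) + 2 * μ E := by rw [← hadd]; ring
        have hEt : 2 * μ E ≠ ∞ := ne_top_of_le_ne_top (hcell_t μ m x) hsmall
        exact (ENNReal.add_le_add_iff_right hEt).1 this
      have hB := hsub (2 * D) c (4 * (n + 1) * t) (by positivity) (Q \ E)
        (sdiff_subset.trans h2) (hQm.diff hEm) (by
          calc μ (ball c (4 * (n + 1) * t)) ≤ D * μ (ball c t) := hdbl c t ht
            _ ≤ D * μ Q := by gcongr
            _ ≤ D * (2 * μ (Q \ E)) := by gcongr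
            _ = _ := by ring)
      have hQF : ν Q ≤ M * ν (Q \ E) := (measure_mono h2).trans hB
      have hQ0 : ν Q ≠ 0 := fun h => hν0 c t ht (measure_mono_null hcQ h)
      have hM0 : M ≠ 0 := by
        intro h; rw [h, zero_mul] at hQF
        exact hQ0 (le_antisymm hQF bot_le)
      have hνadd : ν E + ν (Q \ E) = ν Q := by
        rw [← measure_inter_add_sdiff Q hEm, inter_eq_right.2 hE]
      have hinv : M⁻¹ * ν Q ≤ ν (Q \ E) := by
        rw [mul_comm, ← div_eq_mul_inv]
        exact ENNReal.div_le_of_le_mul' hQF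
      have hQt := hcell_t ν m x
      rw [hβdef, ENNReal.sub_mul (fun _ _ => hQt), one_mul]
      refine ENNReal.le_sub_of_add_le_right
        (ne_top_of_le_ne_top hQt (hinv.trans (measure_mono sdiff_subset))) ?_
      calc ν E + M⁻¹ * ν Q ≤ ν E + ν (Q \ E) := by gcongr
        _ = ν Q := hνadd)
    x₀ (fun h => hμ0 x₀ r hr (measure_mono_null hin h)) (hcell_t μ _ _)
    (fun h => hν0 x₀ r hr (measure_mono_null hin h)) (hcell_t ν _ _) hε
  have hνQ : ν (cell idx 0 x₀) ≤ N * ν (ball x₀ r) :=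
    (measure_mono hout).trans (hsub D x₀ (4 * (n + 1) * r) (by positivity) (ball x₀ r)
      (ball_subset_ball (by nlinarith)) measurableSet_ball (hdbl x₀ r hr))
  calc ∫⁻ y in ball x₀ r, f y ^ ε ∂ν ≤ ∫⁻ y in cell idx 0 x₀, f y ^ ε ∂ν :=
        lintegral_mono_set hin
    _ ≤ S * ((ν (cell idx 0 x₀) / μ (cell idx 0 x₀)) ^ ε * ν (cell idx 0 x₀)) := hmain
    _ ≤ S * ((N * ν (ball x₀ r) / μ (ball x₀ r)) ^ ε * (N * ν (ball x₀ r))) := by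
        gcongr
    _ = _ := by
        rw [mul_div_assoc, ENNReal.mul_rpow_of_nonneg _ _ hε.le]; ring

end Grid

/-! ### Weights -/

section Weights

variable {n : ℕ}

lemma volume_ball_mul (x : En n) {K : ℝ} (hK : 0 < K) (r : ℝ) :
    volume (ball x (K * r)) = ENNReal.ofReal (K ^ n) * volume (ball x r) := by
  rw [Measure.addHaar_ball_mul_of_pos volume x hK, Measure.addHaar_ball_center volume x,
    finrank_euclideanSpace_fin]

/-- A measure that is small on Lebesgue-small subsets of balls is doubling: thin annuli around a
ball carry at most half of the mass of the enlarged ball, so a small dilation at most doubles the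
mass, and finitely many of them produce any dilation. -/
lemma doubling_of_small {μ : Measure (En n)} [IsLocallyFiniteMeasure μ]
    {p : ℝ} (hp : 0 < p) {C : ℝ≥0∞} (hC : C ≠ ∞)
    (H : ∀ x r, 0 < r → ∀ E ⊆ ball x r, MeasurableSet E →
      μ E ^ p * volume (ball x r) ≤ C * volume E * μ (ball x r) ^ p) (K : ℝ) (hK : 0 < K) :
    ∃ D : ℝ≥0∞, D ≠ ∞ ∧ ∀ x r, 0 < r → μ (ball x (K * r)) ≤ D * μ (ball x r) := by
  have hcont : Continuous fun s : ℝ => C * (1 - ENNReal.ofReal (s ^ n)) :=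
    (ENNReal.continuous_const_mul hC).comp ((ENNReal.continuous_sub_left ENNReal.one_ne_top).comp
      (ENNReal.continuous_ofReal.comp (continuous_pow n)))
  have h1 : C * (1 - ENNReal.ofReal ((1 : ℝ) ^ n)) < (2⁻¹ : ℝ≥0∞) ^ p := by
    simp only [one_pow, ENNReal.ofReal_one, tsub_self, mul_zero]
    exact ENNReal.rpow_pos (by simp) (by simp)
  have hev := (hcont.tendsto 1).eventually (gt_mem_nhds h1)
  have hev2 := (hev.and (lt_mem_nhds (zero_lt_one' ℝ))).filter_mono
    (nhdsWithin_le_nhds (s := Iio (1 : ℝ)))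
  obtain ⟨s, ⟨hs, hs0⟩, hs1⟩ := (hev2.and self_mem_nhdsWithin).exists
  have hs1' : s < 1 := hs1
  have hstep : ∀ x r, 0 < r → μ (ball x r) ≤ 2 * μ (ball x (s * r)) := by
    intro x r hr
    have hsub : ball x (s * r) ⊆ ball x r := ball_subset_ball (by nlinarith)
    set V := volume (ball x r) with hV
    have hV0 : V ≠ 0 := (measure_ball_pos _ _ hr).ne'
    have hVt : V ≠ ∞ := measure_ball_lt_top.ne
    have hE : volume (ball x r \ ball x (s * r)) = (1 - ENNReal.ofReal (s ^ n)) * V := by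
      rw [measure_sdiff hsub measurableSet_ball.nullMeasurableSet measure_ball_lt_top.ne,
        volume_ball_mul x hs0, ENNReal.sub_mul (fun _ _ => hVt), one_mul]
    have hH := H x r hr _ (sdiff_subset : ball x r \ ball x (s * r) ⊆ ball x r)
      (measurableSet_ball.diff measurableSet_ball)
    rw [hE] at hH
    have hH' : μ (ball x r \ ball x (s * r)) ^ p ≤ (2⁻¹ * μ (ball x r)) ^ p := by
      refine (ENNReal.mul_le_mul_iff_left hV0 hVt).1 (hH.trans ?_)
      rw [ENNReal.mul_rpow_of_nonneg _ _ hp.le]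
      calc C * ((1 - ENNReal.ofReal (s ^ n)) * V) * μ (ball x r) ^ p
          = (C * (1 - ENNReal.ofReal (s ^ n))) * μ (ball x r) ^ p * V := by ring
        _ ≤ _ := by gcongr
    have hhalf := (ENNReal.rpow_le_rpow_iff hp).1 hH'
    have hadd : μ (ball x (s * r)) + μ (ball x r \ ball x (s * r)) = μ (ball x r) := by
      have := measure_inter_add_sdiff (μ := μ) (ball x r) (measurableSet_ball : MeasurableSet (ball x (s * r)))
      rwa [inter_eq_right.2 hsub] at this
    have hμt : μ (ball x r) ≠ ∞ := measure_ball_lt_top.ne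
    have h2 : μ (ball x r) + μ (ball x r) ≤ 2 * μ (ball x (s * r)) + μ (ball x r) := by
      calc μ (ball x r) + μ (ball x r)
          = 2 * μ (ball x (s * r)) + 2 * μ (ball x r \ ball x (s * r)) := by
            rw [← hadd]; ring
        _ ≤ 2 * μ (ball x (s * r)) + 2 * (2⁻¹ * μ (ball x r)) := by gcongr
        _ = _ := by
            rw [← mul_assoc 2 2⁻¹, ENNReal.mul_inv_cancel (by simp) (by simp), one_mul]
    exact (ENNReal.add_le_add_iff_right hμt).1 h2
  have hiter : ∀ (N : ℕ) x r, 0 < r → μ (ball x r) ≤ 2 ^ N * μ (ball x (s ^ N * r)) := by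
    intro N x
    induction N with
    | zero => intro r _; simp
    | succ N ih =>
      intro r hr
      calc μ (ball x r) ≤ 2 * μ (ball x (s * r)) := hstep x r hr
        _ ≤ 2 * (2 ^ N * μ (ball x (s ^ N * (s * r)))) := by
          gcongr; exact ih _ (by positivity)
        _ = _ := by rw [pow_succ, pow_succ, mul_assoc (s ^ N)]; ring
  obtain ⟨N, hN⟩ := exists_pow_lt_of_lt_one (inv_pos.2 hK) hs1'
  refine ⟨2 ^ N, by simp, fun x r hr => (hiter N x (K * r) (by positivity)).trans ?_⟩
  gcongr
  have : s ^ N * K ≤ 1 := by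
    rw [← le_div_iff₀ hK, one_div]; exact hN.le
  nlinarith

lemma lavg_congr_weight {w : En n → ℝ} {u : En n → ℝ≥0∞}
    (huw : (fun x => ENNReal.ofReal (w x)) =ᵐ[volume] u) (S : Set (En n)) (e : ℝ) :
    lavg S (fun z => ENNReal.ofReal (w z) ^ e) = (∫⁻ z in S, u z ^ e) / volume S := by
  unfold lavg
  congr 1
  refine lintegral_congr_ae (ae_restrict_of_ae ?_)
  filter_upwards [huw] with x hx
  simp only [hx]

lemma lavg_congr_weight_one {w : En n → ℝ} {u : En n → ℝ≥0∞}
    (huw : (fun x => ENNReal.ofReal (w x)) =ᵐ[volume] u) (S : Set (En n)) :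
    lavg S (fun z => ENNReal.ofReal (w z)) = (∫⁻ z in S, u z) / volume S := by
  have := lavg_congr_weight huw S 1
  simpa using this

/-- Both `A_1` and `A_p` give the comparison `(|E| / |B|) ^ s ≤ C * w(E) / w(B)`. -/
lemma compare_of_memA {w : En n → ℝ} {u : En n → ℝ≥0∞} (hu : Measurable u)
    (hu0 : ∀ x, u x ≠ 0) (hut : ∀ x, u x ≠ ∞)
    (huw : (fun x => ENNReal.ofReal (w x)) =ᵐ[volume] u) {p : ℝ} (hA : MemA w p) :
    ∃ s : ℝ, 0 < s ∧ ∃ C : ℝ≥0∞, C ≠ ∞ ∧ ∀ (x : En n) r, 0 < r → ∀ E ⊆ ball x r,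
      MeasurableSet E → volume E ^ s * (∫⁻ y in ball x r, u y) ≤
        C * (∫⁻ y in E, u y) * volume (ball x r) ^ s := by
  rcases hA with ⟨-, C, hC⟩ | ⟨hp, C, hC⟩
  · refine ⟨1, one_pos, C, by simp, fun x r hr E hE hEm => ?_⟩
    have hV0 : volume (ball x r) ≠ 0 := (measure_ball_pos _ _ hr).ne'
    have hVt : volume (ball x r) ≠ ∞ := measure_ball_lt_top.ne
    have h1 := ae_restrict_of_ae_restrict_of_subset hE (hC x r hr)
    rw [lavg_congr_weight_one huw] at h1
    have h2 : ((∫⁻ y in ball x r, u y) / volume (ball x r)) * volume E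
        ≤ C * ∫⁻ y in E, u y := by
      rw [← setLIntegral_const, ← lintegral_const_mul _ hu]
      refine lintegral_mono_ae ?_
      filter_upwards [h1, ae_restrict_of_ae huw] with y hy hy'
      rwa [hy'] at hy
    simp only [ENNReal.rpow_one]
    calc volume E * (∫⁻ y in ball x r, u y)
        = volume E * ((∫⁻ y in ball x r, u y) / volume (ball x r) * volume (ball x r)) := by
          rw [ENNReal.div_mul_cancel hV0 hVt]
      _ = ((∫⁻ y in ball x r, u y) / volume (ball x r)) * volume E * volume (ball x r) := by ring
      _ ≤ _ := by gcongr
  · have hp0 : 0 < p := by linarith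
    have hp1 : 0 < p - 1 := by linarith
    refine ⟨p, hp0, C, by simp, fun x r hr E hE hEm => ?_⟩
    have hV0 : volume (ball x r) ≠ 0 := (measure_ball_pos _ _ hr).ne'
    have hVt : volume (ball x r) ≠ ∞ := measure_ball_lt_top.ne
    have h1 := hC x r hr
    rw [lavg_congr_weight_one huw, lavg_congr_weight huw] at h1
    set U := ∫⁻ y in ball x r, u y
    set V := volume (ball x r)
    set σ := ∫⁻ y in ball x r, u y ^ (1 - p / (p - 1)) with hσ
    have h2 : U * σ ^ (p - 1) ≤ C * V ^ p := by
      calc U * σ ^ (p - 1) = (U / V * V) * (σ / V * V) ^ (p - 1) := by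
            rw [ENNReal.div_mul_cancel hV0 hVt, ENNReal.div_mul_cancel hV0 hVt]
        _ = (U / V * (σ / V) ^ (p - 1)) * (V ^ (1 : ℝ) * V ^ (p - 1)) := by
            rw [ENNReal.mul_rpow_of_nonneg _ _ hp1.le, ENNReal.rpow_one]; ring
        _ ≤ C * (V ^ (1 : ℝ) * V ^ (p - 1)) := by gcongr
        _ = _ := by rw [← ENNReal.rpow_add _ _ hV0 hVt]; congr 2; ring
    have hconj : p.HolderConjugate (p / (p - 1)) := by
      rw [Real.holderConjugate_iff]
      refine ⟨hp, ?_⟩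
      field_simp; ring
    have h3 := ENNReal.lintegral_mul_le_Lp_mul_Lq (volume.restrict E) hconj
      (f := fun y => u y ^ (1 / p)) (g := fun y => u y ^ (-(1 / p)))
      (hu.pow_const _).aemeasurable (hu.pow_const _).aemeasurable
    have h4 : ∫⁻ y in E, ((fun y => u y ^ (1 / p)) * fun y => u y ^ (-(1 / p))) y
        = volume E := by
      rw [← setLIntegral_one E]
      refine lintegral_congr fun y => ?_
      simp only [Pi.mul_apply]
      rw [← ENNReal.rpow_add _ _ (hu0 y) (hut y)]; simp
    have h5 : ∀ y, (u y ^ (1 / p)) ^ p = u y := fun y => by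
      rw [← ENNReal.rpow_mul, one_div_mul_cancel hp0.ne', ENNReal.rpow_one]
    have h6 : ∀ y, (u y ^ (-(1 / p))) ^ (p / (p - 1)) = u y ^ (1 - p / (p - 1)) := fun y => by
      rw [← ENNReal.rpow_mul]; congr 1; field_simp; ring
    rw [h4] at h3
    simp only [h5, h6] at h3
    have h7 : volume E ^ p ≤ (∫⁻ y in E, u y) * σ ^ (p - 1) := by
      calc volume E ^ p ≤ ((∫⁻ y in E, u y) ^ (1 / p) *
            (∫⁻ y in E, u y ^ (1 - p / (p - 1))) ^ (1 / (p / (p - 1)))) ^ p := by gcongr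
        _ = (∫⁻ y in E, u y) * (∫⁻ y in E, u y ^ (1 - p / (p - 1))) ^ (p - 1) := by
            rw [ENNReal.mul_rpow_of_nonneg _ _ hp0.le, ← ENNReal.rpow_mul, ← ENNReal.rpow_mul,
              one_div_mul_cancel hp0.ne', ENNReal.rpow_one]
            congr 2; field_simp
        _ ≤ _ := by gcongr; exact lintegral_mono_set hE
    calc volume E ^ p * U ≤ (∫⁻ y in E, u y) * σ ^ (p - 1) * U := by gcongr
      _ = (∫⁻ y in E, u y) * (U * σ ^ (p - 1)) := by ring
      _ ≤ (∫⁻ y in E, u y) * (C * V ^ p) := by gcongr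
      _ = _ := by ring

/-- Both `RH_∞` and `RH_q` give the comparison `(w(E) / w(B)) ^ s ≤ C * |E| / |B|`. -/
lemma compare_of_memRHe {w : En n → ℝ} {u : En n → ℝ≥0∞} (hu : Measurable u)
    (huw : (fun x => ENNReal.ofReal (w x)) =ᵐ[volume] u) {q : ℝ≥0∞} (hq : 1 < q)
    (hR : MemRHe w q) :
    ∃ s : ℝ, 0 < s ∧ ∃ C : ℝ≥0∞, C ≠ ∞ ∧ ∀ (x : En n) r, 0 < r → ∀ E ⊆ ball x r,
      MeasurableSet E → (∫⁻ y in E, u y) ^ s * volume (ball x r) ≤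
        C * volume E * (∫⁻ y in ball x r, u y) ^ s := by
  rcases hR with ⟨-, C, hC⟩ | ⟨hqt, C, hC⟩
  · refine ⟨1, one_pos, C, by simp, fun x r hr E hE hEm => ?_⟩
    have hV0 : volume (ball x r) ≠ 0 := (measure_ball_pos _ _ hr).ne'
    have hVt : volume (ball x r) ≠ ∞ := measure_ball_lt_top.ne
    have h1 := ae_restrict_of_ae_restrict_of_subset hE (hC x r hr)
    rw [lavg_congr_weight_one huw] at h1
    have h2 : ∫⁻ y in E, u y ≤
        C * ((∫⁻ y in ball x r, u y) / volume (ball x r)) * volume E := by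
      rw [← setLIntegral_const]
      refine lintegral_mono_ae ?_
      filter_upwards [h1, ae_restrict_of_ae huw] with y hy hy'
      rwa [hy'] at hy
    simp only [ENNReal.rpow_one]
    calc (∫⁻ y in E, u y) * volume (ball x r)
        ≤ C * ((∫⁻ y in ball x r, u y) / volume (ball x r)) * volume E * volume (ball x r) := by
          gcongr
      _ = C * volume E * ((∫⁻ y in ball x r, u y) / volume (ball x r) * volume (ball x r)) := by
          ring
      _ = _ := by rw [ENNReal.div_mul_cancel hV0 hVt]
  · set Q := q.toReal with hQ
    have hQ1 : 1 < Q := by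
      rw [hQ, ← ENNReal.toReal_one]
      exact (ENNReal.toReal_lt_toReal ENNReal.one_ne_top hqt).2 hq
    have hQ0 : 0 < Q := by linarith
    have hconj : Q.HolderConjugate (Q / (Q - 1)) := by
      have : Q - 1 ≠ 0 := by linarith
      rw [Real.holderConjugate_iff]
      refine ⟨hQ1, ?_⟩
      field_simp; ring
    set t := Q / (Q - 1) with ht
    have ht0 : 0 < t := hconj.symm.pos
    refine ⟨t, ht0, (C : ℝ≥0∞) ^ t, ENNReal.rpow_ne_top_of_nonneg ht0.le (by simp),
      fun x r hr E hE hEm => ?_⟩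
    have hV0 : volume (ball x r) ≠ 0 := (measure_ball_pos _ _ hr).ne'
    have hVt : volume (ball x r) ≠ ∞ := measure_ball_lt_top.ne
    have h1 := hC x r hr
    rw [lavg_congr_weight_one huw, lavg_congr_weight huw] at h1
    set U := ∫⁻ y in ball x r, u y
    set V := volume (ball x r)
    set R := ∫⁻ y in ball x r, u y ^ Q with hRdef
    have h2 : ∫⁻ y in E, u y ≤ R ^ (1 / Q) * volume E ^ (1 / t) := by
      have h3 := ENNReal.lintegral_mul_le_Lp_mul_Lq (volume.restrict E) hconj
        (f := u) (g := fun _ => 1) hu.aemeasurable aemeasurable_const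
      have h4 : ∫⁻ y in E, (u * (fun _ => 1 : En n → ℝ≥0∞)) y = ∫⁻ y in E, u y := by simp
      rw [h4] at h3
      simp only [ENNReal.one_rpow, setLIntegral_one] at h3
      refine h3.trans ?_
      gcongr
      exact lintegral_mono_set hE
    have h5 : (∫⁻ y in E, u y) * V ^ (1 / t) ≤ C * U * volume E ^ (1 / t) := by
      calc (∫⁻ y in E, u y) * V ^ (1 / t)
          ≤ R ^ (1 / Q) * volume E ^ (1 / t) * V ^ (1 / t) := by gcongr
        _ = (R / V * V) ^ (1 / Q) * volume E ^ (1 / t) * V ^ (1 / t) := by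
            rw [ENNReal.div_mul_cancel hV0 hVt]
        _ = (R / V) ^ (1 / Q) * (V ^ (1 / Q) * V ^ (1 / t)) * volume E ^ (1 / t) := by
            rw [ENNReal.mul_rpow_of_nonneg _ _ (by positivity)]; ring
        _ = (R / V) ^ (1 / Q) * V * volume E ^ (1 / t) := by
            rw [← ENNReal.rpow_add _ _ hV0 hVt, one_div, one_div, hconj.inv_add_inv_eq_one,
              ENNReal.rpow_one]
        _ ≤ C * (U / V) * V * volume E ^ (1 / t) := by gcongr
        _ = C * (U / V * V) * volume E ^ (1 / t) := by ring
        _ = _ := by rw [ENNReal.div_mul_cancel hV0 hVt]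
    have h6 := ENNReal.rpow_le_rpow h5 ht0.le
    simp only [ENNReal.mul_rpow_of_nonneg _ _ ht0.le] at h6
    rw [← ENNReal.rpow_mul, ← ENNReal.rpow_mul, one_div_mul_cancel ht0.ne', ENNReal.rpow_one,
      ENNReal.rpow_one] at h6
    refine h6.trans_eq ?_
    ring

/-- A measurable representative of an a.e. positive weight with values in `(0, ∞)` everywhere. -/
lemma exists_representative {w : En n → ℝ} (hw : LocallyIntegrable w volume)
    (hpos : ∀ᵐ x, 0 < w x) :
    ∃ u : En n → ℝ≥0∞, Measurable u ∧ (∀ x, u x ≠ 0) ∧ (∀ x, u x ≠ ∞) ∧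
      (fun x => ENNReal.ofReal (w x)) =ᵐ[volume] u := by
  have hm := hw.aestronglyMeasurable.aemeasurable
  classical
  refine ⟨fun x => if 0 < hm.mk w x then ENNReal.ofReal (hm.mk w x) else 1, ?_, ?_, ?_, ?_⟩
  · exact Measurable.ite (measurableSet_lt measurable_const hm.measurable_mk)
      hm.measurable_mk.ennreal_ofReal measurable_const
  · intro x
    by_cases h : 0 < hm.mk w x <;> simp [h]
  · intro x
    by_cases h : 0 < hm.mk w x <;> simp [h]
  · filter_upwards [hm.ae_eq_mk, hpos] with x hx hp
    rw [hx] at hp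
    simp [hx, hp]

lemma isLocallyFinite_weight {w : En n → ℝ} (hw : LocallyIntegrable w volume) {u : En n → ℝ≥0∞}
    (huw : (fun x => ENNReal.ofReal (w x)) =ᵐ[volume] u) :
    IsLocallyFiniteMeasure (volume.withDensity u) := by
  refine ⟨fun x => ?_⟩
  obtain ⟨s, hs, hint⟩ := hw x
  obtain ⟨r, hr, hball⟩ := Metric.mem_nhds_iff.1 hs
  refine ⟨ball x r, ball_mem_nhds x hr, ?_⟩
  rw [withDensity_apply _ measurableSet_ball,
    ← lintegral_congr_ae (ae_restrict_of_ae huw)]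
  exact (hint.mono_set hball).lintegral_lt_top

end Weights

/-- `A_∞ = ∪_{1≤p<∞} A_p = ∪_{1<q≤∞} RH_q` — for an a.e. positive weight `w`,
`w ∈ A_p` for some `p ∈ [1,∞)` iff `w ∈ RH_q` for some `q ∈ (1,∞]`. -/
theorem statement12
    (n : ℕ) (w : En n → ℝ) (hw0 : ∀ x, 0 ≤ w x) (hwloc : LocallyIntegrable w volume)
    (hwpos : ∀ᵐ x, 0 < w x) :
    (∃ p : ℝ, 1 ≤ p ∧ MemA w p) ↔ (∃ q : ℝ≥0∞, 1 < q ∧ MemRHe w q) := by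
  obtain ⟨u, hu, hu0, hut, huw⟩ := exists_representative hwloc hwpos
  set ω : Measure (En n) := volume.withDensity u with hω
  have : IsLocallyFiniteMeasure ω := isLocallyFinite_weight hwloc huw
  have hωE : ∀ E, MeasurableSet E → ω E = ∫⁻ y in E, u y := fun E hE => withDensity_apply _ hE
  have hV0 : ∀ (x : En n) r, 0 < r → volume (ball x r) ≠ 0 :=
    fun x r hr => (measure_ball_pos _ _ hr).ne'
  have hVt : ∀ (x : En n) r, volume (ball x r) ≠ ∞ := fun x r => measure_ball_lt_top.ne
  have hω0 : ∀ (x : En n) r, 0 < r → ω (ball x r) ≠ 0 := by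
    intro x r hr h
    rw [hω, withDensity_apply_eq_zero hu] at h
    have : {y | u y ≠ 0} = univ := eq_univ_of_forall hu0
    rw [this, univ_inter] at h
    exact hV0 x r hr h
  have hωt : ∀ (x : En n) r, ω (ball x r) ≠ ∞ := fun x r => measure_ball_lt_top.ne
  have hK : (0 : ℝ) < 4 * (n + 1) := by positivity
  constructor
  · rintro ⟨p, -, hA⟩
    obtain ⟨s, hs, C, hC, H⟩ := compare_of_memA hu hu0 hut huw hA
    obtain ⟨ε, hε, C', hC', hRH⟩ := ball_reverse_holder (μ := volume) (ν := ω) hu hω hV0 hω0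
      (ENNReal.ofReal_ne_top (r := (4 * ((n : ℝ) + 1)) ^ n))
      (fun x r _ => (volume_ball_mul x hK r).le) hs hC (by
        intro x r hr E hE hEm
        rw [hωE _ measurableSet_ball, hωE _ hEm]
        exact H x r hr E hE hEm)
    have h1ε : 0 < 1 + ε := by linarith
    have hCε : C' ^ (1 / (1 + ε)) ≠ ∞ := ENNReal.rpow_ne_top_of_nonneg (by positivity) hC'
    refine ⟨ENNReal.ofReal (1 + ε), ?_, Or.inr ⟨ENNReal.ofReal_ne_top,
      (C' ^ (1 / (1 + ε))).toNNReal, fun x r hr => ?_⟩⟩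
    · rw [ENNReal.one_lt_ofReal]; linarith
    · rw [ENNReal.toReal_ofReal h1ε.le, ENNReal.coe_toNNReal hCε, lavg_congr_weight_one huw,
        lavg_congr_weight huw, ← hωE _ measurableSet_ball]
      have h1 : ∫⁻ y in ball x r, u y ^ (1 + ε) = ∫⁻ y in ball x r, u y ^ ε ∂ω := by
        rw [hω, setLIntegral_withDensity_eq_setLIntegral_mul _ hu (hu.pow_const _)
          measurableSet_ball]
        refine lintegral_congr fun y => ?_
        rw [ENNReal.rpow_add _ _ (hu0 y) (hut y), ENNReal.rpow_one]; rfl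
      set a := ω (ball x r) / volume (ball x r) with ha
      have ha0 : a ≠ 0 := (ENNReal.div_pos (hω0 x r hr) (hVt x r)).ne'
      have hat : a ≠ ∞ := ENNReal.div_ne_top (hωt x r) (hV0 x r hr)
      have h2 : (∫⁻ y in ball x r, u y ^ (1 + ε)) / volume (ball x r) ≤ C' * a ^ (1 + ε) := by
        rw [h1]
        calc (∫⁻ y in ball x r, u y ^ ε ∂ω) / volume (ball x r)
            ≤ C' * (a ^ ε * ω (ball x r)) / volume (ball x r) := by gcongr; exact hRH x r hr
          _ = C' * (a ^ ε * a) := by rw [ha, mul_div_assoc, mul_div_assoc]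
          _ = _ := by rw [ENNReal.rpow_add _ _ ha0 hat, ENNReal.rpow_one, mul_comm a]
      calc ((∫⁻ y in ball x r, u y ^ (1 + ε)) / volume (ball x r)) ^ (1 / (1 + ε))
          ≤ (C' * a ^ (1 + ε)) ^ (1 / (1 + ε)) := by gcongr
        _ = _ := by
          rw [ENNReal.mul_rpow_of_nonneg _ _ (by positivity), ← ENNReal.rpow_mul,
            mul_one_div_cancel h1ε.ne', ENNReal.rpow_one]
  · rintro ⟨q, hq, hR⟩
    obtain ⟨s, hs, C, hC, H⟩ := compare_of_memRHe hu huw hq hR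
    have H' : ∀ (x : En n) r, 0 < r → ∀ E ⊆ ball x r, MeasurableSet E →
        ω E ^ s * volume (ball x r) ≤ C * volume E * ω (ball x r) ^ s := by
      intro x r hr E hE hEm
      rw [hωE _ measurableSet_ball, hωE _ hEm]
      exact H x r hr E hE hEm
    obtain ⟨D, hD, hdbl⟩ := doubling_of_small hs hC H' _ hK
    have hinv : (volume : Measure (En n)) = ω.withDensity u⁻¹ :=
      (withDensity_inv_same hu (ae_of_all _ hu0) (ae_of_all _ hut)).symm
    obtain ⟨ε, hε, C', hC', hRH⟩ := ball_reverse_holder (μ := ω) (ν := volume) hu.inv hinv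
      hω0 hV0 hD hdbl hs hC H'
    have hCε : C' ^ (1 / ε) ≠ ∞ := ENNReal.rpow_ne_top_of_nonneg (by positivity) hC'
    have hp : 1 < 1 + 1 / ε := by
      have : 0 < 1 / ε := by positivity
      linarith
    -- `p = 1 + 1 / ε` is the exponent with `1 - p / (p - 1) = -ε`
    refine ⟨1 + 1 / ε, hp.le, Or.inr ⟨hp, (C' ^ (1 / ε)).toNNReal, fun x r hr => ?_⟩⟩
    have he1 : 1 + 1 / ε - 1 = 1 / ε := by ring
    have he2 : 1 - (1 + 1 / ε) / (1 / ε) = -ε := by field_simp; ring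
    rw [ENNReal.coe_toNNReal hCε, lavg_congr_weight_one huw, lavg_congr_weight huw,
      ← hωE _ measurableSet_ball, he1, he2]
    have h1 : ∫⁻ y in ball x r, u y ^ (-ε) = ∫⁻ y in ball x r, u⁻¹ y ^ ε := by
      refine lintegral_congr fun y => ?_
      rw [ENNReal.rpow_neg, Pi.inv_apply, ENNReal.inv_rpow]
    set V := volume (ball x r) with hV
    set U := ω (ball x r) with hU
    have h2 : (∫⁻ y in ball x r, u y ^ (-ε)) / V ≤ C' * (V / U) ^ ε := by
      rw [h1]
      refine ENNReal.div_le_of_le_mul ?_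
      rw [mul_assoc]
      exact hRH x r hr
    calc U / V * ((∫⁻ y in ball x r, u y ^ (-ε)) / V) ^ (1 / ε)
        ≤ U / V * (C' * (V / U) ^ ε) ^ (1 / ε) := by gcongr
      _ = C' ^ (1 / ε) * (U / V * V / U) := by
          rw [ENNReal.mul_rpow_of_nonneg _ _ (by positivity), ← ENNReal.rpow_mul,
            mul_one_div_cancel hε.ne', ENNReal.rpow_one, mul_div_assoc]
          ring
      _ = C' ^ (1 / ε) := by
          rw [ENNReal.div_mul_cancel (hV0 x r hr) (hVt x r),
            ENNReal.div_self (hω0 x r hr) (hωt x r), mul_one]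

end
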